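/- For every r ≥ 0, the category r-bC of r-bigraded complexes over R admits a cofibrantly generated model category structure in which the fibrations are the bidegreewise surjections and the weak equivalences are the quasi-isomorphisms; a set of generating acyclic cofibrations is {0 → Y_r(p,n)}_{p,n ∈ ℤ} and a set of generating cofibrations is {δ_r^{p,n} : R^{p-r,n-r+1} → Y_r(p,n)}_{p,n ∈ ℤ}, where δ_r^{p,n} is the inclusion of the cycle generator. -/

import Mathlib

open CategoryTheory Limits

noncomputable section

attribute [local instance] Classical.propDecidable

/-! ## `r`-bigraded complexes -/

structure BC (R : Type) [CommRing R] (r : ℕ) : Type 1 where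
  X : ℤ → ℤ → Type
  [acg : ∀ p n, AddCommGroup (X p n)]
  [mdl : ∀ p n, Module R (X p n)]
  d : ∀ (p n p' n' : ℤ), p' + (r : ℤ) = p → n' + (r : ℤ) = n + 1 → (X p n →ₗ[R] X p' n')
  d_comp_d : ∀ (p n p' n' p'' n'' : ℤ) (h1 : p' + (r : ℤ) = p) (h2 : n' + (r : ℤ) = n + 1)
      (h3 : p'' + (r : ℤ) = p') (h4 : n'' + (r : ℤ) = n' + 1),
      (d p' n' p'' n'' h3 h4).comp (d p n p' n' h1 h2) = 0

attribute [instance] BC.acg BC.mdl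

namespace BC

variable {R : Type} [CommRing R] {r : ℕ}

/-- Transport along equalities of bidegrees. -/
def cst (A : BC R r) {p n p' n' : ℤ} (h1 : p = p') (h2 : n = n') : A.X p n →ₗ[R] A.X p' n' :=
  match p', n', h1, h2 with
  | _, _, rfl, rfl => LinearMap.id

@[simp] lemma cst_rfl (A : BC R r) {p n : ℤ} (x : A.X p n) :
    A.cst (rfl : p = p) (rfl : n = n) x = x := rfl

lemma cst_cst (A : BC R r) {p n p' n' p'' n'' : ℤ} (h1 : p = p') (h2 : n = n')
    (h3 : p' = p'') (h4 : n' = n'') (x : A.X p n) :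
    A.cst h3 h4 (A.cst h1 h2 x) = A.cst (h1.trans h3) (h2.trans h4) x := by
  subst h1; subst h2; subst h3; subst h4; rfl

lemma cst_proof_irrel (A : BC R r) {p n p' n' : ℤ} (h1 h1' : p = p') (h2 h2' : n = n')
    (x : A.X p n) : A.cst h1 h2 x = A.cst h1' h2' x := rfl

lemma cst_inj (A : BC R r) {p n p' n' : ℤ} (h1 : p = p') (h2 : n = n') :
    Function.Injective (A.cst h1 h2) := by
  subst h1; subst h2; exact fun a b h => h

/-- The differential commutes with transport. -/
lemma d_cst (A : BC R r) {p₁ n₁ q₁ t₁ p₂ n₂ q₂ t₂ : ℤ} (e1 : p₁ = p₂) (e2 : n₁ = n₂)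
    (hq : q₁ + (r : ℤ) = p₁) (ht : t₁ + (r : ℤ) = n₁ + 1)
    (hq' : q₂ + (r : ℤ) = p₂) (ht' : t₂ + (r : ℤ) = n₂ + 1)
    (f1 : q₁ = q₂) (f2 : t₁ = t₂) (x : A.X p₁ n₁) :
    A.d p₂ n₂ q₂ t₂ hq' ht' (A.cst e1 e2 x) = A.cst f1 f2 (A.d p₁ n₁ q₁ t₁ hq ht x) := by
  subst e1; subst e2; subst f1; subst f2; rfl

/-- The differential does not depend on the chosen representation of the target indices. -/
lemma d_index_eq (A : BC R r) {p n q t q' t' : ℤ}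
    (h1 : q + (r : ℤ) = p) (h2 : t + (r : ℤ) = n + 1)
    (h1' : q' + (r : ℤ) = p) (h2' : t' + (r : ℤ) = n + 1)
    (f1 : q = q') (f2 : t = t') (x : A.X p n) :
    A.d p n q' t' h1' h2' x = A.cst f1 f2 (A.d p n q t h1 h2 x) := by
  subst f1; subst f2; rfl

lemma d_cst_d (A : BC R r) {p n p' n' q m : ℤ} (h1 : p' + (r : ℤ) = p)
    (h2 : n' + (r : ℤ) = n + 1) (e1 : p' = q) (e2 : n' = m) {q' m' : ℤ}
    (h1' : q' + (r : ℤ) = q) (h2' : m' + (r : ℤ) = m + 1) (x : A.X p n) :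
    A.d q m q' m' h1' h2' (A.cst e1 e2 (A.d p n p' n' h1 h2 x)) = 0 := by
  subst e1; subst e2
  exact congrArg (fun g => g x) (A.d_comp_d p n p' n' q' m' h1 h2 h1' h2')

def cycles (A : BC R r) (p n : ℤ) : Submodule R (A.X p n) :=
  LinearMap.ker (A.d p n (p - (r : ℤ)) (n + 1 - (r : ℤ)) (by ring) (by ring))

def boundaries (A : BC R r) (p n : ℤ) : Submodule R (A.X p n) :=
  LinearMap.range (A.d (p + (r : ℤ)) (n + (r : ℤ) - 1) p n (by ring) (by ring))

lemma mem_cycles (A : BC R r) {p n : ℤ} (x : A.X p n) :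
    x ∈ A.cycles p n ↔
      A.d p n (p - (r : ℤ)) (n + 1 - (r : ℤ)) (by ring) (by ring) x = 0 :=
  Iff.rfl

lemma mem_cycles_iff (A : BC R r) {p n q m : ℤ} (h1 : q + (r : ℤ) = p)
    (h2 : m + (r : ℤ) = n + 1) (x : A.X p n) :
    x ∈ A.cycles p n ↔ A.d p n q m h1 h2 x = 0 := by
  have e1 : q = p - (r : ℤ) := by omega
  have e2 : m = n + 1 - (r : ℤ) := by omega
  subst e1; subst e2
  exact A.mem_cycles x

lemma d_mem_boundaries (A : BC R r) {p n q m : ℤ} (h1 : q + (r : ℤ) = p)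
    (h2 : m + (r : ℤ) = n + 1) (x : A.X p n) :
    A.d p n q m h1 h2 x ∈ A.boundaries q m := by
  have e1 : p = q + (r : ℤ) := by omega
  have e2 : n = m + (r : ℤ) - 1 := by omega
  refine ⟨A.cst e1 e2 x, ?_⟩
  rw [d_cst (f1 := rfl) (f2 := rfl) (hq := h1) (ht := h2)]
  rfl

lemma d_mem_cycles (A : BC R r) {p n q m : ℤ} (h1 : q + (r : ℤ) = p)
    (h2 : m + (r : ℤ) = n + 1) (x : A.X p n) :
    A.d p n q m h1 h2 x ∈ A.cycles q m := by
  rw [A.mem_cycles]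
  exact congrArg (fun g => g x)
    (A.d_comp_d p n q m (q - (r : ℤ)) (m + 1 - (r : ℤ)) h1 h2 (by ring) (by ring))

lemma boundaries_le_cycles (A : BC R r) (p n : ℤ) : A.boundaries p n ≤ A.cycles p n := by
  rintro x ⟨y, rfl⟩
  exact A.d_mem_cycles _ _ y

lemma cst_mem_cycles (A : BC R r) {p n p' n' : ℤ} (h1 : p = p') (h2 : n = n')
    {x : A.X p n} (hx : x ∈ A.cycles p n) : A.cst h1 h2 x ∈ A.cycles p' n' := by
  subst h1; subst h2; exact hx

lemma cst_mem_boundaries (A : BC R r) {p n p' n' : ℤ} (h1 : p = p') (h2 : n = n')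
    {x : A.X p n} (hx : x ∈ A.boundaries p n) : A.cst h1 h2 x ∈ A.boundaries p' n' := by
  subst h1; subst h2; exact hx

/-- The submodule of `cycles` by which we quotient to get homology. -/
def hsub (A : BC R r) (p n : ℤ) : Submodule R ↥(A.cycles p n) :=
  (A.boundaries p n).comap (A.cycles p n).subtype

/-- Homology of an `r`-bigraded complex. -/
abbrev H (A : BC R r) (p n : ℤ) : Type := ↥(A.cycles p n) ⧸ A.hsub p n

/-- The homology class of a cycle. -/
def mkH (A : BC R r) {p n : ℤ} (x : ↥(A.cycles p n)) : A.H p n :=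
  Submodule.Quotient.mk x

lemma mkH_surjective (A : BC R r) (p n : ℤ) : Function.Surjective (A.mkH (p := p) (n := n)) :=
  Submodule.Quotient.mk_surjective _

@[simp] lemma mkH_add (A : BC R r) {p n : ℤ} (x y : ↥(A.cycles p n)) :
    A.mkH (x + y) = A.mkH x + A.mkH y := rfl

@[simp] lemma mkH_smul (A : BC R r) {p n : ℤ} (c : R) (x : ↥(A.cycles p n)) :
    A.mkH (c • x) = c • A.mkH x := rfl

@[simp] lemma mkH_zero (A : BC R r) {p n : ℤ} :
    A.mkH (0 : ↥(A.cycles p n)) = 0 := rfl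

lemma mkH_eq_zero (A : BC R r) {p n : ℤ} (x : ↥(A.cycles p n))
    (hx : (x : A.X p n) ∈ A.boundaries p n) : A.mkH x = 0 :=
  (Submodule.Quotient.mk_eq_zero _).2 hx

/-- Acyclicity. -/
def Acyclic (A : BC R r) : Prop := ∀ p n : ℤ, Subsingleton (A.H p n)

end BC

/-! ## Morphisms of bigraded complexes -/

@[ext] structure BCHom {R : Type} [CommRing R] {r : ℕ} (A B : BC R r) where
  f : ∀ p n : ℤ, A.X p n →ₗ[R] B.X p n
  comm : ∀ (p n p' n' : ℤ) (h1 : p' + (r : ℤ) = p) (h2 : n' + (r : ℤ) = n + 1),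
    (B.d p n p' n' h1 h2).comp (f p n) = (f p' n').comp (A.d p n p' n' h1 h2)

namespace BCHom

variable {R : Type} [CommRing R] {r : ℕ} {A B C : BC R r}

lemma comm_apply (φ : BCHom A B) (p n p' n' : ℤ) (h1 : p' + (r : ℤ) = p)
    (h2 : n' + (r : ℤ) = n + 1) (x : A.X p n) :
    B.d p n p' n' h1 h2 (φ.f p n x) = φ.f p' n' (A.d p n p' n' h1 h2 x) :=
  congrArg (fun g => g x) (φ.comm p n p' n' h1 h2)

lemma f_cst (φ : BCHom A B) {p n p' n' : ℤ} (e1 : p = p') (e2 : n = n') (x : A.X p n) :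
    φ.f p' n' (A.cst e1 e2 x) = B.cst e1 e2 (φ.f p n x) := by
  subst e1; subst e2; rfl

protected def id (A : BC R r) : BCHom A A :=
  ⟨fun _ _ => LinearMap.id, fun _ _ _ _ _ _ => rfl⟩

protected def comp (φ : BCHom A B) (ψ : BCHom B C) : BCHom A C where
  f p n := (ψ.f p n).comp (φ.f p n)
  comm p n p' n' h1 h2 := by
    ext x
    simp only [LinearMap.coe_comp, Function.comp_apply]
    rw [ψ.comm_apply, φ.comm_apply]

lemma map_cycles (φ : BCHom A B) (p n : ℤ) {x : A.X p n} (hx : x ∈ A.cycles p n) :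
    φ.f p n x ∈ B.cycles p n := by
  rw [BC.mem_cycles] at hx ⊢
  rw [φ.comm_apply, hx, map_zero]

lemma map_boundaries (φ : BCHom A B) (p n : ℤ) {x : A.X p n} (hx : x ∈ A.boundaries p n) :
    φ.f p n x ∈ B.boundaries p n := by
  obtain ⟨y, rfl⟩ := hx
  rw [← φ.comm_apply]
  exact B.d_mem_boundaries _ _ _

/-- The induced map on cycles. -/
def cyclesMap (φ : BCHom A B) (p n : ℤ) : ↥(A.cycles p n) →ₗ[R] ↥(B.cycles p n) :=
  (φ.f p n).restrict (fun x hx => φ.map_cycles p n hx)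

@[simp] lemma cyclesMap_apply (φ : BCHom A B) (p n : ℤ) (x : ↥(A.cycles p n)) :
    ((φ.cyclesMap p n) x : B.X p n) = φ.f p n x := rfl

/-- The induced map on homology. -/
def hMap (φ : BCHom A B) (p n : ℤ) : A.H p n →ₗ[R] B.H p n :=
  Submodule.mapQ _ _ (φ.cyclesMap p n) (by
    intro x hx
    exact φ.map_boundaries p n hx)

@[simp] lemma hMap_mkH (φ : BCHom A B) (p n : ℤ) (x : ↥(A.cycles p n)) :
    φ.hMap p n (A.mkH x) = B.mkH (φ.cyclesMap p n x) := rfl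

lemma hMap_id (p n : ℤ) : (BCHom.id A).hMap p n = LinearMap.id := by
  apply Submodule.linearMap_qext
  ext x
  rfl

lemma hMap_comp (φ : BCHom A B) (ψ : BCHom B C) (p n : ℤ) :
    (φ.comp ψ).hMap p n = (ψ.hMap p n).comp (φ.hMap p n) := by
  apply Submodule.linearMap_qext
  ext x
  rfl

end BCHom

instance {R : Type} [CommRing R] {r : ℕ} : Category (BC R r) where
  Hom A B := BCHom A B
  id A := BCHom.id A
  comp φ ψ := φ.comp ψ
  id_comp φ := by apply BCHom.ext; rfl
  comp_id φ := by apply BCHom.ext; rfl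
  assoc φ ψ χ := by apply BCHom.ext; rfl

namespace BC

variable {R : Type} [CommRing R] {r : ℕ}

/-- Quasi-isomorphisms of bigraded complexes. -/
def IsQIso {A B : BC R r} (φ : A ⟶ B) : Prop :=
  ∀ p n : ℤ, Function.Bijective (BCHom.hMap φ p n)

/-- Bidegreewise surjections. -/
def IsDegreewiseSurj {A B : BC R r} (φ : A ⟶ B) : Prop :=
  ∀ p n : ℤ, Function.Surjective (BCHom.f φ p n)

/-- The class of bidegreewise surjections. -/
def degreewiseSurj (R : Type) [CommRing R] (r : ℕ) : MorphismProperty (BC R r) :=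
  fun _ _ φ => IsDegreewiseSurj φ

/-- The class of quasi-isomorphisms. -/
def qIso (R : Type) [CommRing R] (r : ℕ) : MorphismProperty (BC R r) :=
  fun _ _ φ => IsQIso φ

end BC
/-! ## Model category structures -/

universe v u

section ModelStructures

variable {C : Type u} [Category.{v} C] {D : Type u} [Category.{v} D]

/-- `f` is a retract of `g` in the arrow category. -/
def MorRetract {X Y X' Y' : C} (f : X ⟶ Y) (g : X' ⟶ Y') : Prop :=
  ∃ (i : X ⟶ X') (r : X' ⟶ X) (j : Y ⟶ Y') (q : Y' ⟶ Y),
    i ≫ r = 𝟙 X ∧ j ≫ q = 𝟙 Y ∧ i ≫ g = f ≫ j ∧ g ≫ q = r ≫ f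

/-- A model category structure on a bicomplete category: classes of weak equivalences,
cofibrations and fibrations satisfying two-out-of-three, retract closure, lifting and
factorization axioms. -/
structure ModelStructure (C : Type u) [Category.{v} C] where
  W : MorphismProperty C
  Cof : MorphismProperty C
  Fib : MorphismProperty C
  hasLimits : HasLimits C
  hasColimits : HasColimits C
  w_comp : ∀ {X Y Z : C} (f : X ⟶ Y) (g : Y ⟶ Z), W f → W g → W (f ≫ g)
  w_cancel_left : ∀ {X Y Z : C} (f : X ⟶ Y) (g : Y ⟶ Z), W f → W (f ≫ g) → W g
  w_cancel_right : ∀ {X Y Z : C} (f : X ⟶ Y) (g : Y ⟶ Z), W g → W (f ≫ g) → W f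
  w_retract : ∀ {X Y X' Y' : C} (f : X ⟶ Y) (g : X' ⟶ Y'), MorRetract f g → W g → W f
  cof_retract : ∀ {X Y X' Y' : C} (f : X ⟶ Y) (g : X' ⟶ Y'), MorRetract f g → Cof g → Cof f
  fib_retract : ∀ {X Y X' Y' : C} (f : X ⟶ Y) (g : X' ⟶ Y'), MorRetract f g → Fib g → Fib f
  lift_cof_trivFib : ∀ {A B X Y : C} (i : A ⟶ B) (p : X ⟶ Y),
    Cof i → Fib p → W p → HasLiftingProperty i p
  lift_trivCof_fib : ∀ {A B X Y : C} (i : A ⟶ B) (p : X ⟶ Y),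
    Cof i → W i → Fib p → HasLiftingProperty i p
  fact_cof_trivFib : ∀ {X Y : C} (f : X ⟶ Y),
    ∃ (Z : C) (i : X ⟶ Z) (p : Z ⟶ Y), Cof i ∧ Fib p ∧ W p ∧ i ≫ p = f
  fact_trivCof_fib : ∀ {X Y : C} (f : X ⟶ Y),
    ∃ (Z : C) (i : X ⟶ Z) (p : Z ⟶ Y), Cof i ∧ W i ∧ Fib p ∧ i ≫ p = f

/-- The class of morphisms with the right lifting property with respect to `T`. -/
def MorRlp (T : MorphismProperty C) : MorphismProperty C :=
  fun _ _ p => ∀ ⦃A B : C⦄ (i : A ⟶ B), T i → HasLiftingProperty i p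

/-- A model structure is cofibrantly generated by a class `I` of generating cofibrations and
a class `J` of generating acyclic cofibrations if the fibrations are exactly the maps with the
right lifting property with respect to `J` and the acyclic fibrations are exactly the maps
with the right lifting property with respect to `I`. -/
structure IsCofibrantlyGenerated (M : ModelStructure C) (I J : MorphismProperty C) : Prop where
  fib_eq : M.Fib = MorRlp J
  trivFib_eq : (fun (X Y : C) (f : X ⟶ Y) => M.W f ∧ M.Fib f) = MorRlp I

/-- An object is cofibrant if the map from an initial object to it is a cofibration. -/
def ModelStructure.Cofibrant (M : ModelStructure C) (A : C) : Prop :=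
  ∀ (Z : C) (h : IsInitial Z), M.Cof (h.to A)

/-- An object is fibrant if the map to a terminal object is a fibration. -/
def ModelStructure.Fibrant (M : ModelStructure C) (A : C) : Prop :=
  ∀ (Z : C) (h : IsTerminal Z), M.Fib (h.from A)

/-- A Quillen adjunction: the right adjoint preserves fibrations and trivial fibrations. -/
structure IsQuillenAdjunction (M : ModelStructure C) (N : ModelStructure D)
    {F : C ⥤ D} {G : D ⥤ C} (adj : F ⊣ G) : Prop where
  fib : ∀ {X Y : D} (f : X ⟶ Y), N.Fib f → M.Fib (G.map f)
  trivFib : ∀ {X Y : D} (f : X ⟶ Y), N.Fib f → N.W f → M.Fib (G.map f) ∧ M.W (G.map f)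

/-- A Quillen equivalence: a Quillen adjunction such that for every cofibrant `A` and
fibrant `X`, a map `F A ⟶ X` is a weak equivalence iff its adjunct is. -/
structure IsQuillenEquivalence (M : ModelStructure C) (N : ModelStructure D)
    {F : C ⥤ D} {G : D ⥤ C} (adj : F ⊣ G) extends IsQuillenAdjunction M N adj : Prop where
  derived : ∀ (A : C) (X : D), M.Cofibrant A → N.Fibrant X →
    ∀ f : F.obj A ⟶ X, N.W f ↔ M.W ((adj.homEquiv A X) f)

end ModelStructures
/-! ## Rank-one components: spheres and discs of bigraded complexes -/

section CondMod

variable (R : Type) [CommRing R]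

/-- The submodule of `R` which is everything if `P` holds and `0` otherwise. -/
def condMod (P : Prop) : Submodule R R := if P then ⊤ else ⊥

variable {R}

lemma condMod_mem {P : Prop} (hP : P) (x : R) : x ∈ condMod R P := by
  unfold condMod
  rw [if_pos hP]
  trivial

lemma condMod_zero_mem (P : Prop) : (0 : R) ∈ condMod R P := Submodule.zero_mem _

lemma condMod_eq_zero {P : Prop} (hP : ¬ P) (x : ↥(condMod R P)) : (x : R) = 0 := by
  have h2 : (x : R) ∈ condMod R P := x.2
  simp only [condMod, if_neg hP, Submodule.mem_bot] at h2
  exact h2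

/-- A "conditional identity" between rank-one conditional modules. -/
def condHom {P Q : Prop} (c : Prop) (h : c → Q) : ↥(condMod R P) →ₗ[R] ↥(condMod R Q) where
  toFun x := ⟨if c then (x : R) else 0, by
    split_ifs with hc
    · exact condMod_mem (h hc) _
    · exact condMod_zero_mem _⟩
  map_add' x y := by
    apply Subtype.ext
    show (if c then ((x : R) + y) else 0) = (if c then (x : R) else 0) + (if c then (y : R) else 0)
    split_ifs <;> simp
  map_smul' a x := by
    apply Subtype.ext
    show (if c then (a • (x : R)) else 0) = a • (if c then (x : R) else 0)
    split_ifs <;> simp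

lemma condHom_apply {P Q : Prop} (c : Prop) (h : c → Q) (x : ↥(condMod R P)) :
    ((condHom c h x : ↥(condMod R Q)) : R) = if c then (x : R) else 0 := rfl

lemma condHom_comp {P Q T : Prop} (c1 c2 : Prop) (h1 : c1 → Q) (h2 : c2 → T) :
    (condHom (R := R) (P := Q) (Q := T) c2 h2).comp (condHom (P := P) c1 h1) =
      condHom (c1 ∧ c2) (fun hc => h2 hc.2) := by
  refine LinearMap.ext fun x => ?_
  apply Subtype.ext
  simp only [LinearMap.comp_apply, condHom_apply]
  split_ifs <;> simp_all

lemma condHom_false {P Q : Prop} (c : Prop) (h : c → Q) (hc : ¬ c) :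
    condHom (R := R) (P := P) (Q := Q) c h = 0 := by
  refine LinearMap.ext fun x => ?_
  apply Subtype.ext
  simp only [condHom_apply, if_neg hc]
  rfl

lemma condHom_congr {P Q : Prop} (c1 c2 : Prop) (h1 : c1 → Q) (h2 : c2 → Q) (e : c1 ↔ c2) :
    condHom (R := R) (P := P) (Q := Q) c1 h1 = condHom c2 h2 := by
  refine LinearMap.ext fun x => ?_
  apply Subtype.ext
  simp only [condHom_apply]
  split_ifs <;> simp_all

end CondMod

section SphereDisc

variable (R : Type) [CommRing R] (r : ℕ) (p n : ℤ)

/-- The sphere: a rank-one free module concentrated in bidegree `(p,n)`. -/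
@[reducible] def sphereBC : BC R r where
  X a b := ↥(condMod R ((a, b) = (p, n)))
  d _ _ _ _ _ _ := 0
  d_comp_d _ _ _ _ _ _ _ _ _ _ := LinearMap.comp_zero _

/-- The disc `𝒴_r(p,n)`: rank-one free modules in bidegrees `(p,n)` and `(p-r, n+1-r)`
with identity differential. -/
@[reducible] def discBC : BC R r where
  X a b := ↥(condMod R ((a, b) = (p, n) ∨ (a, b) = (p - (r : ℤ), n + 1 - (r : ℤ))))
  d a b a' b' h1 h2 := condHom ((a, b) = (p, n)) (by
    intro hc
    right
    rw [Prod.mk.injEq] at hc ⊢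
    omega)
  d_comp_d a b a' b' a'' b'' h1 h2 h3 h4 := by
    rw [condHom_comp]
    apply condHom_false
    rintro ⟨hc1, hc2⟩
    rw [Prod.mk.injEq] at hc1 hc2
    omega

/-- The inclusion of the cycle generator `δ : R^{(p-r,n-r+1)} → 𝒴_r(p,n)`. -/
def deltaBC : sphereBC R r (p - (r : ℤ)) (n + 1 - (r : ℤ)) ⟶ discBC R r p n where
  f a b := condHom ((a, b) = (p - (r : ℤ), n + 1 - (r : ℤ))) (fun hc => Or.inr hc)
  comm a b a' b' h1 h2 := by
    refine LinearMap.ext fun x => ?_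
    simp only [LinearMap.comp_apply]
    have hz : (sphereBC R r (p - (r : ℤ)) (n + 1 - (r : ℤ))).d a b a' b' h1 h2 x = 0 := rfl
    rw [hz, map_zero]
    rw [← LinearMap.comp_apply
      (condHom ((a, b) = (p, n)) _) (condHom ((a, b) = (p - (r : ℤ), n + 1 - (r : ℤ))) _) x]
    rw [condHom_comp]
    rw [condHom_false _ _ (by
      rintro ⟨hc1, hc2⟩
      rw [Prod.mk.injEq] at hc1 hc2
      omega)]
    rfl

end SphereDisc

/-!
Both weak factorization systems come from the small object argument: the disc `discBC R r p n`
corepresents the component of bidegree `(p, n)`, the sphere is a coequalizer of discs, so both are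
finitely presentable. Lifting against `0 ⟶ disc` says that a map is bidegreewise surjective, and
lifting against the inclusion of a sphere into a disc says that a primitive in the target of the
image of a cycle `x` lifts to a primitive of `x`, which holds exactly for the surjective
quasi-isomorphisms.

It remains to see that a map `i` with the left lifting property against all surjections is a
quasi-isomorphism. The mapping path complex factors `i` as a quasi-isomorphism followed by a
surjection, and lifting exhibits `i` as a retract of the quasi-isomorphism.
-/

/-! ## Recognition of model structures -/

section Recognition

variable {C : Type u} [Category.{v} C]

lemma MorRetract.of_retract {P : MorphismProperty C} [P.IsStableUnderRetracts]
    {X Y X' Y' : C} {f : X ⟶ Y} {g : X' ⟶ Y'} (h : MorRetract f g) (hg : P g) : P f := by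
  obtain ⟨i, s, j, q, his, hjq, hi, hs⟩ := h
  have e : RetractArrow f g :=
    { i := Arrow.homMk i j hi
      r := Arrow.homMk s q hs.symm
      retract := by ext <;> simp [his, hjq] }
  exact MorphismProperty.of_retract e hg

lemma llp_le_of_hasFactorization (W F : MorphismProperty C) [W.IsStableUnderRetracts]
    [W.HasFactorization F] : F.llp ≤ W := fun _ _ i hi => by
  have h := W.factorizationData F i
  have := hi _ h.hp
  exact W.of_retract (RetractArrow.ofLeftLiftingProperty h.fac) h.hi

namespace ModelStructure

open MorphismProperty

variable {W I J : MorphismProperty C}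

lemma llp_rlp_inf_le_llp_rlp [W.HasTwoOutOfThreeProperty] [HasFactorization J.rlp.llp J.rlp]
    (hI : I.rlp = W ⊓ J.rlp) (hJ : J.rlp.llp ≤ W) : I.rlp.llp ⊓ W ≤ J.rlp.llp := by
  rintro A B i ⟨hi, hiW⟩
  have h := factorizationData J.rlp.llp J.rlp i
  have hp : I.rlp h.p :=
    hI ▸ ⟨W.of_precomp h.i h.p (hJ _ h.hi) (h.fac.symm ▸ hiW), h.hp⟩
  have := hi _ hp
  exact of_retract (RetractArrow.ofLeftLiftingProperty h.fac) h.hi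

/-- The model structure with weak equivalences `W`, generating cofibrations `I` and generating
acyclic cofibrations `J`, given the two weak factorization systems generated by `I` and `J`. -/
def ofGenerators (W I J : MorphismProperty C) [HasLimits C] [HasColimits C]
    [W.HasTwoOutOfThreeProperty] [W.IsStableUnderRetracts]
    [HasFactorization I.rlp.llp I.rlp] [HasFactorization J.rlp.llp J.rlp]
    (hI : I.rlp = W ⊓ J.rlp) (hJ : J.rlp.llp ≤ W) : ModelStructure C where
  W := W
  Cof := I.rlp.llp
  Fib := J.rlp
  hasLimits := inferInstance
  hasColimits := inferInstance
  w_comp := W.comp_mem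
  w_cancel_left := W.of_precomp
  w_cancel_right := W.of_postcomp
  w_retract _ _ := MorRetract.of_retract
  cof_retract _ _ := MorRetract.of_retract
  fib_retract _ _ := MorRetract.of_retract
  lift_cof_trivFib _ p hi hp hpW := hi p (hI ▸ ⟨hpW, hp⟩)
  lift_trivCof_fib i p hi hiW hp := llp_rlp_inf_le_llp_rlp hI hJ i ⟨hi, hiW⟩ p hp
  fact_cof_trivFib f := by
    have h := factorizationData I.rlp.llp I.rlp f
    obtain ⟨hpW, hp⟩ : (W ⊓ J.rlp) h.p := hI ▸ h.hp
    exact ⟨_, h.i, h.p, h.hi, hp, hpW, h.fac⟩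
  fact_trivCof_fib f := by
    have h := factorizationData J.rlp.llp J.rlp f
    have hIJ : I.rlp ≤ J.rlp := hI ▸ inf_le_right
    exact ⟨_, h.i, h.p, antitone_llp hIJ _ h.hi, hJ _ h.hi, h.hp, h.fac⟩

end ModelStructure

end Recognition

/-! ## Bicompleteness -/

namespace BC

section Bicomplete

variable (R : Type) [CommRing R] (r : ℕ)

/-- The complex shape on `ℤ × ℤ` whose complexes of modules are the `r`-bigraded complexes. -/
def shape : ComplexShape (ℤ × ℤ) where
  Rel i j := j.1 + (r : ℤ) = i.1 ∧ j.2 + (r : ℤ) = i.2 + 1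
  next_eq := by
    rintro ⟨a, b⟩ ⟨c, d⟩ ⟨e, f⟩ ⟨h₁, h₂⟩ ⟨h₃, h₄⟩
    ext <;> dsimp at * <;> omega
  prev_eq := by
    rintro ⟨a, b⟩ ⟨c, d⟩ ⟨e, f⟩ ⟨h₁, h₂⟩ ⟨h₃, h₄⟩
    ext <;> dsimp at * <;> omega

/-- The comparison functor from Mathlib's complexes of shape `BC.shape r` to `r`-bigraded
complexes. It is an equivalence, through which limits and colimits are transported. -/
def ofHomologicalComplex : HomologicalComplex (ModuleCat.{0} R) (shape r) ⥤ BC R r where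
  obj K :=
    { X p n := K.X (p, n)
      d p n p' n' _ _ := (K.d (p, n) (p', n')).hom
      d_comp_d p n p' n' p'' n'' _ _ _ _ := by
        rw [← ModuleCat.hom_comp, K.d_comp_d, ModuleCat.hom_zero] }
  map φ :=
    { f p n := (φ.f (p, n)).hom
      comm p n p' n' _ _ := by
        dsimp only
        rw [← ModuleCat.hom_comp, ← ModuleCat.hom_comp, φ.comm] }

instance : (ofHomologicalComplex R r).Faithful where
  map_injective {K L φ ψ} h := by
    ext ⟨p, n⟩ : 2
    exact congrArg (fun χ : BCHom _ _ => χ.f p n) h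

instance : (ofHomologicalComplex R r).Full where
  map_surjective φ :=
    ⟨{ f i := ModuleCat.ofHom (φ.f i.1 i.2)
       comm' i j hij := ModuleCat.hom_ext (φ.comm i.1 i.2 j.1 j.2 hij.1 hij.2) }, rfl⟩

/-- An `r`-bigraded complex, as a complex of shape `BC.shape r`. -/
def toHomologicalComplex (A : BC R r) : HomologicalComplex (ModuleCat.{0} R) (shape r) where
  X i := ModuleCat.of R (A.X i.1 i.2)
  d i j := if h : (shape r).Rel i j then ModuleCat.ofHom (A.d i.1 i.2 j.1 j.2 h.1 h.2) else 0
  shape _ _ h := dif_neg h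
  d_comp_d' i j k hij hjk := by
    rw [dif_pos hij, dif_pos hjk, ← ModuleCat.ofHom_comp, A.d_comp_d]
    rfl

lemma toHomologicalComplex_d (A : BC R r) {p n p' n' : ℤ} (h₁ : p' + (r : ℤ) = p)
    (h₂ : n' + (r : ℤ) = n + 1) :
    ((toHomologicalComplex R r A).d (p, n) (p', n')).hom = A.d p n p' n' h₁ h₂ :=
  congrArg ModuleCat.Hom.hom (dif_pos (show (shape r).Rel (p, n) (p', n') from ⟨h₁, h₂⟩))

instance : (ofHomologicalComplex R r).EssSurj where
  mem_essImage A := ⟨toHomologicalComplex R r A, ⟨{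
    hom := ⟨fun _ _ => LinearMap.id, fun _ _ _ _ h₁ h₂ =>
      (toHomologicalComplex_d R r A h₁ h₂).symm⟩
    inv := ⟨fun _ _ => LinearMap.id, fun _ _ _ _ h₁ h₂ => toHomologicalComplex_d R r A h₁ h₂⟩
    hom_inv_id := rfl
    inv_hom_id := rfl }⟩⟩

instance : (ofHomologicalComplex R r).IsEquivalence where

instance : HasLimits (BC R r) :=
  have : HasLimits (HomologicalComplex (ModuleCat.{0} R) (shape r)) := ⟨inferInstance⟩
  Adjunction.has_limits_of_equivalence (ofHomologicalComplex R r).inv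

instance : HasColimits (BC R r) :=
  have : HasColimits (HomologicalComplex (ModuleCat.{0} R) (shape r)) := ⟨inferInstance⟩
  Adjunction.has_colimits_of_equivalence (ofHomologicalComplex R r).inv

/-- The component of bidegree `(p, n)`, as a functor. -/
def eval (p n : ℤ) : BC R r ⥤ ModuleCat.{0} R where
  obj A := ModuleCat.of R (A.X p n)
  map φ := ModuleCat.ofHom (BCHom.f φ p n)

instance (p n : ℤ) : PreservesColimits (eval R r p n) :=
  have : PreservesColimits (ofHomologicalComplex R r ⋙ eval R r p n) :=
    show PreservesColimits (HomologicalComplex.eval (ModuleCat.{0} R) (shape r) (p, n)) from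
      ⟨inferInstance⟩
  have : PreservesColimits ((ofHomologicalComplex R r).asEquivalence.inverse ⋙
      (ofHomologicalComplex R r).asEquivalence.functor ⋙ eval R r p n) :=
    comp_preservesColimits _ (ofHomologicalComplex R r ⋙ eval R r p n)
  preservesColimits_of_natIso
    ((ofHomologicalComplex R r).asEquivalence.invFunIdAssoc (eval R r p n))

end Bicomplete

variable {R : Type} [CommRing R] {r : ℕ}

lemma comp_f {A B C : BC R r} (φ : A ⟶ B) (ψ : B ⟶ C) (p n : ℤ) (x : A.X p n) :
    BCHom.f (φ ≫ ψ) p n x = BCHom.f ψ p n (BCHom.f φ p n x) := rfl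

lemma hom_ext {A B : BC R r} {φ ψ : A ⟶ B}
    (h : ∀ p n x, BCHom.f φ p n x = BCHom.f ψ p n x) : φ = ψ :=
  BCHom.ext (funext₂ fun p n => LinearMap.ext (h p n))

lemma d_d (A : BC R r) {p n p' n' p'' n'' : ℤ} (h₁ : p' + (r : ℤ) = p) (h₂ : n' + (r : ℤ) = n + 1)
    (h₃ : p'' + (r : ℤ) = p') (h₄ : n'' + (r : ℤ) = n' + 1) (x : A.X p n) :
    A.d p' n' p'' n'' h₃ h₄ (A.d p n p' n' h₁ h₂ x) = 0 :=
  DFunLike.congr_fun (A.d_comp_d p n p' n' p'' n'' h₁ h₂ h₃ h₄) x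

lemma mem_boundaries_iff (A : BC R r) {p n q m : ℤ} (h₁ : q + (r : ℤ) = p)
    (h₂ : m + (r : ℤ) = n + 1) (x : A.X q m) :
    x ∈ A.boundaries q m ↔ ∃ y, A.d p n q m h₁ h₂ y = x := by
  obtain rfl : p = q + (r : ℤ) := by omega
  obtain rfl : n = m + (r : ℤ) - 1 := by omega
  rfl

lemma mkH_eq_iff (A : BC R r) {p n : ℤ} (x y : ↥(A.cycles p n)) :
    A.mkH x = A.mkH y ↔ (x : A.X p n) - y ∈ A.boundaries p n :=
  Submodule.Quotient.eq _

/-! ## Quasi-isomorphisms -/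

/-- Homology, as a functor to bigraded modules. -/
def homology (R : Type) [CommRing R] (r : ℕ) : BC R r ⥤ (ℤ × ℤ → ModuleCat.{0} R) where
  obj A i := ModuleCat.of R (A.H i.1 i.2)
  map φ i := ModuleCat.ofHom (BCHom.hMap φ i.1 i.2)
  map_id _ := funext fun i => congrArg ModuleCat.ofHom (BCHom.hMap_id i.1 i.2)
  map_comp φ ψ := funext fun i => congrArg ModuleCat.ofHom (BCHom.hMap_comp φ ψ i.1 i.2)

lemma qIso_eq_inverseImage :
    qIso R r = (MorphismProperty.isomorphisms _).inverseImage (homology R r) := by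
  ext A B φ
  simp only [MorphismProperty.inverseImage_iff, MorphismProperty.isomorphisms.iff,
    isIso_pi_iff, Prod.forall, ConcreteCategory.isIso_iff_bijective]
  rfl

instance : (qIso R r).HasTwoOutOfThreeProperty := by
  rw [qIso_eq_inverseImage]
  infer_instance

instance : (qIso R r).IsStableUnderRetracts := by
  rw [qIso_eq_inverseImage]
  infer_instance

/-- The elementwise form of the right lifting property against the inclusions of spheres into
discs: if `x` is a cycle of `A` and `y` satisfies `d y = g x`, then `y` lifts to some `z` with
`d z = x`. -/
def LiftsPrimitives {A B : BC R r} (g : A ⟶ B) : Prop :=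
  ∀ (p n p' n' : ℤ) (h₁ : p' + (r : ℤ) = p) (h₂ : n' + (r : ℤ) = n + 1)
    (x : A.X p' n') (y : B.X p n), x ∈ A.cycles p' n' →
    BCHom.f g p' n' x = B.d p n p' n' h₁ h₂ y →
    ∃ z : A.X p n, A.d p n p' n' h₁ h₂ z = x ∧ BCHom.f g p n z = y

section LiftsPrimitives

variable {A B : BC R r} {g : A ⟶ B}

lemma IsQIso.mem_boundaries_of_map (hg : IsQIso g) {p n : ℤ} {x : A.X p n}
    (hx : x ∈ A.cycles p n) (hgx : BCHom.f g p n x ∈ B.boundaries p n) :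
    x ∈ A.boundaries p n := by
  have h : A.mkH ⟨x, hx⟩ = A.mkH 0 := (hg p n).1 <| by
    rw [BCHom.hMap_mkH, mkH_zero, map_zero]
    exact B.mkH_eq_zero _ hgx
  rwa [mkH_eq_iff, ZeroMemClass.coe_zero, sub_zero] at h

lemma IsQIso.exists_cycle_sub_mem_boundaries (hg : IsQIso g) {p n : ℤ} {y : B.X p n}
    (hy : y ∈ B.cycles p n) :
    ∃ z ∈ A.cycles p n, BCHom.f g p n z - y ∈ B.boundaries p n := by
  obtain ⟨w, hw⟩ := (hg p n).2 (B.mkH ⟨y, hy⟩)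
  obtain ⟨z, rfl⟩ := A.mkH_surjective p n w
  exact ⟨z, z.2, (B.mkH_eq_iff _ _).1 hw⟩

lemma isQIso_of_boundaries
    (hinj : ∀ p n, ∀ x ∈ A.cycles p n, BCHom.f g p n x ∈ B.boundaries p n → x ∈ A.boundaries p n)
    (hsurj : ∀ p n, ∀ y ∈ B.cycles p n,
      ∃ z ∈ A.cycles p n, BCHom.f g p n z - y ∈ B.boundaries p n) : IsQIso g := by
  refine fun p n => ⟨(injective_iff_map_eq_zero _).2 fun w hw => ?_, fun w => ?_⟩
  · obtain ⟨x, rfl⟩ := A.mkH_surjective p n w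
    rw [BCHom.hMap_mkH, ← mkH_zero, mkH_eq_iff, ZeroMemClass.coe_zero, sub_zero] at hw
    exact A.mkH_eq_zero x (hinj p n x x.2 hw)
  · obtain ⟨y, rfl⟩ := B.mkH_surjective p n w
    obtain ⟨z, hz, hzy⟩ := hsurj p n y y.2
    exact ⟨A.mkH ⟨z, hz⟩, (B.mkH_eq_iff _ _).2 hzy⟩

lemma LiftsPrimitives.exists_cycle (h : LiftsPrimitives g) {p n : ℤ} {y : B.X p n}
    (hy : y ∈ B.cycles p n) : ∃ z ∈ A.cycles p n, BCHom.f g p n z = y :=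
  h p n (p - r) (n + 1 - r) (by ring) (by ring) 0 y (Submodule.zero_mem _)
    ((map_zero _).trans hy.symm)

lemma LiftsPrimitives.isDegreewiseSurj (h : LiftsPrimitives g) : IsDegreewiseSurj g := by
  intro p n y
  obtain ⟨x, hx, hxy⟩ := h.exists_cycle
    (B.d_mem_cycles (q := p - r) (m := n + 1 - r) (by ring) (by ring) y)
  obtain ⟨z, -, hz⟩ := h p n _ _ _ _ x y hx hxy
  exact ⟨z, hz⟩

lemma LiftsPrimitives.isQIso (h : LiftsPrimitives g) : IsQIso g := by
  refine isQIso_of_boundaries (fun p n x hx hgx => ?_) fun p n y hy => ?_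
  · obtain ⟨y, hy⟩ := hgx
    obtain ⟨z, rfl, -⟩ := h _ _ p n _ _ x y hx hy.symm
    exact A.d_mem_boundaries _ _ z
  · obtain ⟨z, hz, rfl⟩ := h.exists_cycle hy
    exact ⟨z, hz, by simp only [sub_self, Submodule.zero_mem]⟩

lemma liftsPrimitives_of_isQIso_of_isDegreewiseSurj (hq : IsQIso g) (hs : IsDegreewiseSurj g) :
    LiftsPrimitives g := by
  intro p n p' n' h₁ h₂ x y hx hxy
  obtain ⟨x', rfl⟩ := (A.mem_boundaries_iff h₁ h₂ x).1 <|
    hq.mem_boundaries_of_map hx (hxy ▸ B.d_mem_boundaries h₁ h₂ y)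
  have hc : BCHom.f g p n x' - y ∈ B.cycles p n := by
    rw [B.mem_cycles_iff h₁ h₂, map_sub, BCHom.comm_apply, hxy, sub_self]
  obtain ⟨z, hz, b, hb⟩ := hq.exists_cycle_sub_mem_boundaries hc
  obtain ⟨a, rfl⟩ := hs _ _ b
  rw [BCHom.comm_apply] at hb
  refine ⟨x' - z + A.d (p + (r : ℤ)) (n + (r : ℤ) - 1) p n (by ring) (by ring) a, ?_, ?_⟩
  · rw [map_add, map_sub, d_d, (A.mem_cycles_iff h₁ h₂ z).1 hz, sub_zero, add_zero]
  · rw [map_add, map_sub, hb]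
    abel

lemma liftsPrimitives_iff : LiftsPrimitives g ↔ IsQIso g ∧ IsDegreewiseSurj g :=
  ⟨fun h => ⟨h.isQIso, h.isDegreewiseSurj⟩,
    fun h => liftsPrimitives_of_isQIso_of_isDegreewiseSurj h.1 h.2⟩

end LiftsPrimitives

/-! ## The mapping path complex -/

section MappingPath

variable {A B : BC R r} (φ : A ⟶ B)

/-- The mapping path complex of `φ : A ⟶ B`. An element `(a, b, h)` is to be thought of as a path
`h` in `B` from `φ a` to `b`; accordingly `d (a, b, h) = (d a, d b, b - φ a - d h)`. -/
def mappingPath : BC R r where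
  X p n := A.X p n × B.X p n × B.X (p + r) (n + r - 1)
  d p n p' n' h₁ h₂ :=
    { toFun x := (A.d p n p' n' h₁ h₂ x.1, B.d p n p' n' h₁ h₂ x.2.1,
        B.cst (by omega) (by omega) (x.2.1 - BCHom.f φ p n x.1) -
          B.d (p + r) (n + r - 1) (p' + r) (n' + r - 1) (by omega) (by omega) x.2.2)
      map_add' x y := by
        ext <;> simp only [Prod.fst_add, Prod.snd_add, map_add, map_sub]
        abel
      map_smul' c x := by
        ext <;> simp only [Prod.smul_fst, Prod.smul_snd, map_smul, map_sub, smul_sub,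
          RingHom.id_apply] }
  d_comp_d p n p' n' p'' n'' h₁ h₂ h₃ h₄ := by
    refine LinearMap.ext fun x => Prod.ext (A.d_d ..) (Prod.ext (B.d_d ..) ?_)
    change B.cst _ _ (B.d p n p' n' h₁ h₂ x.2.1 - BCHom.f φ p' n' (A.d p n p' n' h₁ h₂ x.1)) -
      B.d _ _ _ _ _ _ (B.cst _ _ _ - B.d _ _ _ _ _ _ x.2.2) = 0
    rw [map_sub (B.d _ _ _ _ _ _), B.d_d, sub_zero, ← BCHom.comm_apply φ _ _ _ _ h₁ h₂, ← map_sub,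
      B.d_cst _ _ h₁ h₂ _ _ (by omega) (by omega), sub_self]

/-- The inclusion of `A` into the mapping path complex by constant paths. -/
def toMappingPath : A ⟶ mappingPath φ where
  f p n := LinearMap.id.prod ((BCHom.f φ p n).prod 0)
  comm p n p' n' h₁ h₂ := by
    refine LinearMap.ext fun x => Prod.ext rfl (Prod.ext (BCHom.comm_apply φ ..) ?_)
    change B.cst _ _ (BCHom.f φ p n x - BCHom.f φ p n x) - B.d _ _ _ _ _ _ 0 = 0
    rw [sub_self, map_zero, map_zero, sub_zero]

/-- The source of a path, in `A`. -/
def mappingPathSource : mappingPath φ ⟶ A where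
  f _ _ := LinearMap.fst R _ _
  comm _ _ _ _ _ _ := rfl

/-- The endpoint of a path, in `B`. -/
def mappingPathTarget : mappingPath φ ⟶ B where
  f _ _ := LinearMap.fst R _ _ ∘ₗ LinearMap.snd R _ _
  comm _ _ _ _ _ _ := rfl

lemma mappingPathTarget_isDegreewiseSurj : IsDegreewiseSurj (mappingPathTarget φ) :=
  fun _ _ b => ⟨(0, b, 0), rfl⟩

lemma sub_eq_d_of_mem_cycles_mappingPath {p n : ℤ} {x : (mappingPath φ).X p n}
    (hx : x ∈ (mappingPath φ).cycles p n) :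
    x.2.1 - BCHom.f φ p n x.1 =
      B.d (p + r) (n + r - 1) p n rfl (sub_add_cancel _ _).symm x.2.2 := by
  have h : B.cst _ _ (x.2.1 - BCHom.f φ p n x.1) - B.d _ _ _ _ _ _ x.2.2 = 0 :=
    congrArg (fun y => y.2.2) (((mappingPath φ).mem_cycles x).1 hx)
  rw [sub_eq_zero, B.d_index_eq rfl (sub_add_cancel _ _).symm _ _ (by ring) (by ring)] at h
  exact B.cst_inj _ _ h

lemma toMappingPath_isQIso : IsQIso (toMappingPath φ) := by
  refine isQIso_of_boundaries (fun p n a _ ha => ?_) fun p n x hx => ?_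
  · exact BCHom.map_boundaries (mappingPathSource φ) p n ha
  refine ⟨x.1, BCHom.map_cycles (mappingPathSource φ) p n hx, (0, -x.2.2, 0), ?_⟩
  have h := sub_eq_d_of_mem_cycles_mappingPath φ hx
  refine Prod.ext ?_ (Prod.ext ?_ ?_)
  · change A.d _ _ _ _ _ _ 0 = x.1 - x.1
    rw [map_zero, sub_self]
  · change B.d _ _ _ _ _ _ (-x.2.2) = BCHom.f φ p n x.1 - x.2.1
    rw [map_neg, ← h, neg_sub]
  · change B.cst rfl rfl (-x.2.2 - BCHom.f φ _ _ 0) - B.d _ _ _ _ _ _ 0 = 0 - x.2.2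
    rw [map_zero, map_zero, cst_rfl, sub_zero, sub_zero, zero_sub]

instance : (qIso R r).HasFactorization (degreewiseSurj R r) where
  nonempty_mapFactorizationData φ := ⟨{
    Z := mappingPath φ
    i := toMappingPath φ
    p := mappingPathTarget φ
    fac := rfl
    hi := toMappingPath_isQIso φ
    hp := mappingPathTarget_isDegreewiseSurj φ }⟩

end MappingPath

end BC

/-! ## Maps out of spheres and discs -/

section CondMod

variable {R : Type} [CommRing R] {P : Prop}

/-- The generator of the conditional rank-one module `condMod R P` when `P` holds. -/
def condGen (hP : P) : ↥(condMod R P) := ⟨1, condMod_mem hP 1⟩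

lemma eq_smul_condGen (hP : P) (s : ↥(condMod R P)) : s = (s : R) • condGen hP :=
  Subtype.ext (mul_one (s : R)).symm

lemma condMod.eq_zero (hP : ¬ P) (s : ↥(condMod R P)) : s = 0 :=
  Subtype.ext (condMod_eq_zero hP s)

lemma condHom_condGen {Q c : Prop} (hc : c) (hP : P) (h : c → Q) :
    condHom (R := R) c h (condGen hP) = condGen (h hc) :=
  Subtype.ext (if_pos hc)

end CondMod

namespace BC

variable {R : Type} [CommRing R] {r : ℕ}

/-- The family of elements of `A` with value `z` in bidegree `(p, n)` and `0` elsewhere. -/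
def single (A : BC R r) {p n : ℤ} (z : A.X p n) (a b : ℤ) : A.X a b :=
  Pi.single (M := fun i : ℤ × ℤ => A.X i.1 i.2) (p, n) z (a, b)

lemma single_self (A : BC R r) {p n : ℤ} (z : A.X p n) : A.single z p n = z :=
  Pi.single_eq_same (M := fun i : ℤ × ℤ => A.X i.1 i.2) (p, n) z

lemma single_of_ne (A : BC R r) {p n : ℤ} (z : A.X p n) {a b : ℤ} (h : (a, b) ≠ (p, n)) :
    A.single z a b = 0 :=
  Pi.single_eq_of_ne (M := fun i : ℤ × ℤ => A.X i.1 i.2) h z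

end BC

section SphereDiscMaps

variable {R : Type} [CommRing R] {r : ℕ} {A B : BC R r} {p n : ℤ}

/-- The map out of the sphere classifying a cycle. -/
def sphereHom (A : BC R r) (z : A.X p n) (hz : z ∈ A.cycles p n) : sphereBC R r p n ⟶ A where
  f a b := LinearMap.toSpanSingleton R _ (A.single z a b) ∘ₗ Submodule.subtype _
  comm a b a' b' h₁ h₂ := by
    refine LinearMap.ext fun s => ?_
    change A.d a b a' b' h₁ h₂ ((s : R) • A.single z a b) = (0 : R) • _
    rw [map_smul, zero_smul]
    by_cases h : (a, b) = (p, n)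
    · obtain ⟨rfl, rfl⟩ := Prod.mk.inj h
      rw [A.single_self, (A.mem_cycles_iff h₁ h₂ z).1 hz, smul_zero]
    · rw [A.single_of_ne z h, map_zero, smul_zero]

/-- The map out of the disc classifying an element. -/
def discHom (A : BC R r) (z : A.X p n) : discBC R r p n ⟶ A where
  f a b := LinearMap.toSpanSingleton R _ (A.single z a b +
    A.single (A.d p n (p - r) (n + 1 - r) (by ring) (by ring) z) a b) ∘ₗ Submodule.subtype _
  comm a b a' b' h₁ h₂ := by
    refine LinearMap.ext fun s => ?_
    simp only [LinearMap.comp_apply, LinearMap.toSpanSingleton_apply, Submodule.subtype_apply,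
      condHom_apply, map_smul, map_add]
    by_cases h : (a, b) = (p, n)
    · obtain ⟨rfl, rfl⟩ := Prod.mk.inj h
      obtain rfl : a' = a - r := by omega
      obtain rfl : b' = b + 1 - r := by omega
      have hab : (a - (r : ℤ), b + 1 - (r : ℤ)) ≠ (a, b) := by
        rw [Ne, Prod.mk.injEq]
        omega
      rw [if_pos rfl, A.single_self, A.single_self, A.single_of_ne z hab,
        A.single_of_ne _ hab.symm, map_zero, add_zero, zero_add]
    · rw [if_neg h, zero_smul, A.single_of_ne z h, map_zero, zero_add]
      by_cases h' : (a, b) = (p - (r : ℤ), n + 1 - (r : ℤ))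
      · obtain ⟨rfl, rfl⟩ := Prod.mk.inj h'
        rw [A.single_self, A.d_d, smul_zero]
      · rw [A.single_of_ne _ h', map_zero, smul_zero]

/-- The generator of the disc. -/
def discGen (R : Type) [CommRing R] (r : ℕ) (p n : ℤ) : (discBC R r p n).X p n :=
  condGen (Or.inl rfl)

/-- The generator of the sphere. -/
def sphereGen (R : Type) [CommRing R] (r : ℕ) (p n : ℤ) : (sphereBC R r p n).X p n :=
  condGen rfl

lemma sphereGen_mem_cycles : sphereGen R r p n ∈ (sphereBC R r p n).cycles p n := rfl

lemma discHom_discGen (z : A.X p n) : BCHom.f (discHom A z) p n (discGen R r p n) = z := by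
  have hpn : (p, n) ≠ (p - (r : ℤ), n + 1 - (r : ℤ)) := by
    rw [Ne, Prod.mk.injEq]
    omega
  change (1 : R) • (A.single z p n + A.single _ p n) = z
  rw [A.single_self, A.single_of_ne _ hpn, add_zero, one_smul]

lemma sphereHom_sphereGen (z : A.X p n) (hz : z ∈ A.cycles p n) :
    BCHom.f (sphereHom A z hz) p n (sphereGen R r p n) = z := by
  change (1 : R) • A.single z p n = z
  rw [A.single_self, one_smul]

lemma d_discGen :
    (discBC R r p n).d p n (p - r) (n + 1 - r) (sub_add_cancel _ _) (sub_add_cancel _ _)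
      (discGen R r p n) = condGen (Or.inr rfl) :=
  condHom_condGen rfl (Or.inl rfl) fun _ => Or.inr rfl

lemma deltaBC_sphereGen :
    BCHom.f (deltaBC R r p n) _ _ (sphereGen R r _ _) =
      (discBC R r p n).d p n (p - r) (n + 1 - r) (sub_add_cancel _ _) (sub_add_cancel _ _)
        (discGen R r p n) :=
  (condHom_condGen rfl rfl Or.inr).trans d_discGen.symm

lemma sphereBC_hom_ext {φ ψ : sphereBC R r p n ⟶ A}
    (h : BCHom.f φ p n (sphereGen R r p n) = BCHom.f ψ p n (sphereGen R r p n)) : φ = ψ := by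
  refine BC.hom_ext fun a b s => ?_
  by_cases hab : (a, b) = (p, n)
  · obtain ⟨rfl, rfl⟩ := Prod.mk.inj hab
    rw [eq_smul_condGen rfl s, map_smul, map_smul]
    exact congrArg ((s : R) • ·) h
  · rw [condMod.eq_zero hab s, map_zero, map_zero]

lemma discBC_hom_ext {φ ψ : discBC R r p n ⟶ A}
    (h : BCHom.f φ p n (discGen R r p n) = BCHom.f ψ p n (discGen R r p n)) : φ = ψ := by
  refine BC.hom_ext fun a b s => ?_
  by_cases hab : (a, b) = (p, n)
  · obtain ⟨rfl, rfl⟩ := Prod.mk.inj hab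
    rw [eq_smul_condGen (Or.inl rfl) s, map_smul, map_smul]
    exact congrArg ((s : R) • ·) h
  by_cases hab' : (a, b) = (p - (r : ℤ), n + 1 - (r : ℤ))
  · obtain ⟨rfl, rfl⟩ := Prod.mk.inj hab'
    rw [eq_smul_condGen (Or.inr rfl) s, map_smul, map_smul, ← d_discGen, ← BCHom.comm_apply,
      ← BCHom.comm_apply, h]
  · rw [condMod.eq_zero (not_or.2 ⟨hab, hab'⟩) s, map_zero, map_zero]

lemma hasLiftingProperty_deltaBC_iff {g : A ⟶ B} :
    (∀ p n, HasLiftingProperty (deltaBC R r p n) g) ↔ BC.LiftsPrimitives g := by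
  constructor
  · intro h p n p' n' h₁ h₂ x y hx hxy
    obtain rfl : p' = p - r := by omega
    obtain rfl : n' = n + 1 - r := by omega
    have sq : CommSq (sphereHom A x hx) (deltaBC R r p n) g (discHom B y) := ⟨by
      apply sphereBC_hom_ext
      rw [BC.comp_f, BC.comp_f, sphereHom_sphereGen, hxy, deltaBC_sphereGen,
        ← BCHom.comm_apply, discHom_discGen]⟩
    have := h p n
    refine ⟨BCHom.f sq.lift p n (discGen R r p n), ?_, ?_⟩
    · rw [BCHom.comm_apply, ← deltaBC_sphereGen, ← BC.comp_f, sq.fac_left, sphereHom_sphereGen]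
    · rw [← BC.comp_f, sq.fac_right, discHom_discGen]
  · refine fun h p n => ⟨fun {u v} sq => ?_⟩
    obtain ⟨z, hz, hz'⟩ := h p n (p - r) (n + 1 - r) (by ring) (by ring)
      (BCHom.f u _ _ (sphereGen R r _ _)) (BCHom.f v _ _ (discGen R r p n))
      (BCHom.map_cycles _ _ _ sphereGen_mem_cycles) (by
        rw [BCHom.comm_apply, ← deltaBC_sphereGen, ← BC.comp_f, ← BC.comp_f, sq.w])
    refine ⟨⟨⟨discHom A z, ?_, ?_⟩⟩⟩
    · apply sphereBC_hom_ext
      rw [BC.comp_f, deltaBC_sphereGen, ← BCHom.comm_apply, discHom_discGen, hz]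
    · apply discBC_hom_ext
      rw [BC.comp_f, discHom_discGen, hz']

end SphereDiscMaps

/-! ## The small object argument -/

section FinitelyPresentable

open Opposite

variable {R : Type} [CommRing R] {r : ℕ}

lemma hasSmallObjectArgument_ofHoms {C : Type u} [Category.{v} C] {ι : Type v}
    [HasColimitsOfSize.{v, v} C] {A B : ι → C} (i : ∀ k, A k ⟶ B k)
    [∀ k, IsFinitelyPresentable.{v} (A k)] :
    MorphismProperty.HasSmallObjectArgument.{v} (MorphismProperty.ofHoms i) := by
  have := Cardinal.fact_isRegular_aleph0.{v}
  let := Cardinal.orderBotAleph0OrdToType.{v}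
  have := MorphismProperty.isSmall_ofHoms.{v} i
  have : (MorphismProperty.ofHoms i).IsCardinalForSmallObjectArgument Cardinal.aleph0.{v} :=
    { preservesColimit := by
        rintro _ _ _ _ _ ⟨k⟩ _ _
        infer_instance }
  exact ⟨.aleph0, inferInstance, inferInstance, inferInstance⟩

lemma discHom_comp {A B : BC R r} {p n : ℤ} (z : A.X p n) (φ : A ⟶ B) :
    discHom A z ≫ φ = discHom B (BCHom.f φ p n z) :=
  discBC_hom_ext (by rw [BC.comp_f, discHom_discGen, discHom_discGen])

/-- The disc `discBC R r p n` corepresents evaluation at `(p, n)`. -/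
def discCoyonedaIso (R : Type) [CommRing R] (r : ℕ) (p n : ℤ) :
    BC.eval R r p n ⋙ forget (ModuleCat.{0} R) ≅ coyoneda.obj (op (discBC R r p n)) :=
  NatIso.ofComponents
    (fun A =>
      Equiv.toIso (X := A.X p n) (Y := discBC R r p n ⟶ A)
      { toFun := fun z : A.X p n => discHom A z
        invFun := fun φ => BCHom.f φ p n (discGen R r p n)
        left_inv := discHom_discGen
        right_inv := fun _ => discBC_hom_ext (discHom_discGen _) })
    (fun φ => by
      ext z
      exact (discHom_comp z φ).symm)

instance (p n : ℤ) : IsFinitelyPresentable.{0} (discBC R r p n) :=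
  have := Cardinal.fact_isRegular_aleph0.{0}
  have : (forget (ModuleCat.{0} R)).IsFinitelyAccessible :=
    Functor.isFinitelyAccessible_iff_preservesFilteredColimits.2 inferInstance
  Functor.isCardinalAccessible_of_natIso (discCoyonedaIso R r p n) _

/-- The zero complex. -/
def zeroBC (R : Type) [CommRing R] (r : ℕ) : BC R r where
  X _ _ := PUnit
  d _ _ _ _ _ _ := 0
  d_comp_d _ _ _ _ _ _ _ _ _ _ := rfl

lemma isZero_zeroBC : IsZero (zeroBC R r) where
  unique_to B := ⟨⟨⟨fun _ _ => 0, fun _ _ _ _ _ _ => by simp⟩⟩,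
    fun φ => BC.hom_ext fun p n _ => map_zero (BCHom.f φ p n)⟩
  unique_from B := ⟨⟨⟨fun _ _ => 0, fun _ _ _ _ _ _ => rfl⟩⟩,
    fun _ => BC.hom_ext fun _ _ _ => rfl⟩

instance : IsFinitelyPresentable.{0} (zeroBC R r) :=
  have := Cardinal.fact_isRegular_aleph0.{0}
  Retract.isCardinalPresentable (X := discBC R r 0 0)
    { i := isZero_zeroBC.to_ _
      r := isZero_zeroBC.from_ _
      retract := isZero_zeroBC.eq_of_src _ _ } _

lemma isFinitelyPresentable_of_isColimit_cofork {C : Type u} [Category.{v} C] {X Y : C}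
    {f g : X ⟶ Y} [IsFinitelyPresentable.{v} X] [IsFinitelyPresentable.{v} Y] (c : Cofork f g)
    (hc : IsColimit c) : IsFinitelyPresentable.{v} c.pt := by
  have := Cardinal.fact_isRegular_aleph0.{v}
  have : ∀ k, IsCardinalPresentable ((parallelPair f g).obj k) Cardinal.aleph0.{v} := by
    rintro (_ | _) <;> dsimp <;> infer_instance
  exact isCardinalPresentable_of_isColimit'.{v} c hc _
    ((hasCardinalLT_aleph0_iff _).2 inferInstance)

/-- The quotient map from the disc to the sphere on the same bidegree. -/
def discToSphere (R : Type) [CommRing R] (r : ℕ) (p n : ℤ) :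
    discBC R r p n ⟶ sphereBC R r p n :=
  discHom _ (sphereGen R r p n)

lemma discToSphere_discGen (p n : ℤ) :
    BCHom.f (discToSphere R r p n) p n (discGen R r p n) = sphereGen R r p n :=
  discHom_discGen _

instance (p n : ℤ) : Epi (discToSphere R r p n) where
  left_cancellation u v h := sphereBC_hom_ext (by
    rw [← discToSphere_discGen, ← BC.comp_f, h, BC.comp_f])

lemma discToSphere_deltaBC_comp_eq_iff {A : BC R r} {p n : ℤ} {φ : discBC R r p n ⟶ A} :
    (discToSphere R r _ _ ≫ deltaBC R r p n) ≫ φ = discHom _ 0 ≫ φ ↔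
      BCHom.f φ p n (discGen R r p n) ∈ A.cycles p n := by
  have h : BCHom.f (discToSphere R r _ _ ≫ deltaBC R r p n) _ _ (discGen R r _ _) =
      (discBC R r p n).d p n (p - r) (n + 1 - r) (sub_add_cancel _ _) (sub_add_cancel _ _)
        (discGen R r p n) := by
    rw [BC.comp_f, discToSphere_discGen, deltaBC_sphereGen]
  rw [discHom_comp, map_zero, BC.mem_cycles, BCHom.comm_apply, ← h, ← BC.comp_f]
  refine ⟨fun h' => by rw [h', discHom_discGen], fun h' => discBC_hom_ext ?_⟩
  rw [h', discHom_discGen]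

lemma discToSphere_sphereHom {A : BC R r} {p n : ℤ} (φ : discBC R r p n ⟶ A)
    (hφ : BCHom.f φ p n (discGen R r p n) ∈ A.cycles p n) :
    discToSphere R r p n ≫ sphereHom A _ hφ = φ :=
  discBC_hom_ext (by rw [BC.comp_f, discToSphere_discGen, sphereHom_sphereGen])

/-- The sphere is the quotient of the disc by the boundary of its generator. -/
def discToSphereIsCoequalizer (R : Type) [CommRing R] (r : ℕ) (p n : ℤ) :
    IsColimit (Cofork.ofπ (discToSphere R r p n)
      (discToSphere_deltaBC_comp_eq_iff.2 (discHom_discGen (sphereGen R r p n) ▸ rfl))) :=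
  Cofork.IsColimit.mk' _ fun s =>
    have hs := discToSphere_sphereHom s.π (discToSphere_deltaBC_comp_eq_iff.1 s.condition)
    ⟨_, hs, fun hm => (cancel_epi (discToSphere R r p n)).1 (hm.trans hs.symm)⟩

instance (p n : ℤ) : IsFinitelyPresentable.{0} (sphereBC R r p n) :=
  isFinitelyPresentable_of_isColimit_cofork _ (discToSphereIsCoequalizer R r p n)

end FinitelyPresentable

/-! ## The generating sets -/

section Generators

variable (R : Type) [CommRing R] (r : ℕ)

/-- The set of generating cofibrations `δ_r : R^{p-r,n-r+1} ⟶ 𝒴_r(p,n)`. -/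
def generatingCof : MorphismProperty (BC R r) :=
  .ofHoms fun i : ℤ × ℤ => deltaBC R r i.1 i.2

/-- The set of generating acyclic cofibrations `0 ⟶ 𝒴_r(p,n)`. -/
def generatingAcyclicCof : MorphismProperty (BC R r) :=
  .ofHoms fun i : ℤ × ℤ => isZero_zeroBC.to_ (discBC R r i.1 i.2)

instance : (generatingCof R r).HasSmallObjectArgument.{0} :=
  hasSmallObjectArgument_ofHoms _

instance : (generatingAcyclicCof R r).HasSmallObjectArgument.{0} :=
  hasSmallObjectArgument_ofHoms _

lemma rlp_generatingCof :
    (generatingCof R r).rlp = BC.qIso R r ⊓ BC.degreewiseSurj R r := by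
  ext A B g
  refine Iff.trans ?_ (hasLiftingProperty_deltaBC_iff.trans BC.liftsPrimitives_iff)
  exact ⟨fun h p n => h _ ⟨(p, n)⟩, fun h _ _ _ ⟨i⟩ => h i.1 i.2⟩

lemma rlp_generatingAcyclicCof :
    (generatingAcyclicCof R r).rlp = BC.degreewiseSurj R r := by
  ext A B g
  constructor
  · intro h p n y
    have := h _ ⟨(p, n)⟩
    have sq : CommSq (isZero_zeroBC.to_ A) (isZero_zeroBC.to_ (discBC R r p n)) g
      (discHom B y) := ⟨isZero_zeroBC.eq_of_src _ _⟩
    refine ⟨BCHom.f sq.lift p n (discGen R r p n), ?_⟩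
    rw [← BC.comp_f, sq.fac_right, discHom_discGen]
  · rintro h _ _ _ ⟨p, n⟩
    refine ⟨fun {u v} sq => ?_⟩
    obtain ⟨x, hx⟩ := h p n (BCHom.f v p n (discGen R r p n))
    refine ⟨⟨⟨discHom A x, isZero_zeroBC.eq_of_src _ _, ?_⟩⟩⟩
    rw [discHom_comp, hx]
    exact discBC_hom_ext (discHom_discGen _)

lemma morRlp_eq_rlp_generatingCof :
    MorRlp (fun _ _ f => ∃ p n : ℤ, Nonempty (Arrow.mk f ≅ Arrow.mk (deltaBC R r p n))) =
      (generatingCof R r).rlp := by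
  ext A B g
  constructor
  · rintro h _ _ _ ⟨p, n⟩
    exact h _ ⟨p, n, ⟨Iso.refl _⟩⟩
  · rintro h _ _ i ⟨p, n, ⟨e⟩⟩
    have := h _ ⟨(p, n)⟩
    exact (HasLiftingProperty.iff_of_arrow_iso_left e g).2 this

lemma morRlp_eq_rlp_generatingAcyclicCof :
    MorRlp (fun A B _ => IsZero A ∧ ∃ p n : ℤ, Nonempty (B ≅ discBC R r p n)) =
      (generatingAcyclicCof R r).rlp := by
  ext A B g
  constructor
  · rintro h _ _ _ ⟨p, n⟩
    exact h _ ⟨isZero_zeroBC, p, n, ⟨Iso.refl _⟩⟩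
  · rintro h _ _ i ⟨hA, p, n, ⟨e⟩⟩
    have := h _ ⟨(p, n)⟩
    have e' : Arrow.mk i ≅ Arrow.mk (isZero_zeroBC.to_ (discBC R r p n)) :=
      Arrow.isoMk (hA.iso isZero_zeroBC) e (hA.eq_of_src _ _)
    exact (HasLiftingProperty.iff_of_arrow_iso_left e' g).2 this

lemma rlp_llp_generatingAcyclicCof_le : (generatingAcyclicCof R r).rlp.llp ≤ BC.qIso R r :=
  rlp_generatingAcyclicCof R r ▸ llp_le_of_hasFactorization _ _

end Generators

/-! ## STATEMENT 0:
For every `r ≥ 0`, the category of `r`-bigraded complexes over `R` admits a cofibrantly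
generated model category structure whose fibrations are the bidegreewise surjections and whose
weak equivalences are the quasi-isomorphisms, with generating acyclic cofibrations
`{0 ⟶ 𝒴_r(p,n)}` and generating cofibrations `{δ_r : R^{p-r,n-r+1} ⟶ 𝒴_r(p,n)}`. -/
theorem projective_model_structure_on_bigraded_complexes (R : Type) [CommRing R] (r : ℕ) :
    ∃ M : ModelStructure (BC R r),
      M.Fib = BC.degreewiseSurj R r ∧
      M.W = BC.qIso R r ∧
      IsCofibrantlyGenerated M
        (fun _ _ f => ∃ p n : ℤ, Nonempty (Arrow.mk f ≅ Arrow.mk (deltaBC R r p n)))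
        (fun A B _ => IsZero A ∧ ∃ p n : ℤ, Nonempty (B ≅ discBC R r p n)) := by
  have hI : (generatingCof R r).rlp = BC.qIso R r ⊓ (generatingAcyclicCof R r).rlp := by
    rw [rlp_generatingCof, rlp_generatingAcyclicCof]
  refine ⟨.ofGenerators (BC.qIso R r) _ _ hI (rlp_llp_generatingAcyclicCof_le R r),
    rlp_generatingAcyclicCof R r, rfl, ?_, ?_⟩
  · exact (morRlp_eq_rlp_generatingAcyclicCof R r).symm
  · exact hI.symm.trans (morRlp_eq_rlp_generatingCof R r).symm
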